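/- arXiv:2512.11153 — 3 statements merged into one kernel-verified Lean document; each statement's English description precedes it below -/
import Mathlib

section
/- Let k ≥ 2 be an integer, and let α ∈ [0, 1/(k-1)) and β ∈ [0,1] be rational numbers satisfying β + (k-1)·α = 1. Then there exists a finite simple graph G that is regular of positive degree (in particular δ(G) > 0) and admits a FAT k-coloring with parameters α and β. -/
/-- A FAT `k`-coloring of a simple graph `G` with parameters `α, β`:
a surjective vertex coloring `c : V → Fin k` such that for every vertex `v` and every
color `i`, the number of neighbors of `v` colored `i` equals `α·deg(v)` if `c v ≠ i`,
and `β·deg(v)` if `c v = i`. -/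
def IsFATColoring {V : Type*} (G : SimpleGraph V) (k : ℕ) (α β : ℝ) (c : V → Fin k) : Prop :=
  Function.Surjective c ∧
  ∀ (v : V) (i : Fin k),
    (Nat.card {u : V | G.Adj v u ∧ c u = i} : ℝ) =
      if c v = i then β * (G.neighborSet v).ncard else α * (G.neighborSet v).ncard

/-! A FAT coloring prescribes which fraction of the neighbors of a vertex lies in each color class,
and these fractions form a symmetric stochastic matrix: `β` on the diagonal and `α` elsewhere.
Every rational symmetric stochastic matrix occurs in this way for a regular graph. After clearing
denominators it suffices to realize a symmetric matrix `n` of natural numbers as numbers of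
neighbors. For this, take two copies of a large finite abelian group for each color, and join `s`
in a copy of color `i` to `t` in an opposite copy of color `j` exactly when `s + t` lies in a fixed
subset with `n i j` elements. -/

variable {ι V A : Type*}

lemma ncard_neighborSet_eq_sum [Fintype ι] (G : SimpleGraph V) (c : V → ι) {v : V}
    (hv : (G.neighborSet v).Finite) :
    (G.neighborSet v).ncard = ∑ i, {u | G.Adj v u ∧ c u = i}.ncard := by
  have h_union : G.neighborSet v = ⋃ i, {u | G.Adj v u ∧ c u = i} := by ext; simp
  have h_disjoint : Pairwise (Function.onFun Disjoint fun i ↦ {u | G.Adj v u ∧ c u = i}) := by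
    refine fun i j hij ↦ Set.disjoint_left.2 fun u hi hj ↦ hij ?_
    exact hi.2.symm.trans hj.2
  rw [h_union, Set.ncard_iUnion_of_finite (fun _ ↦ hv.subset fun _ hu ↦ hu.1) h_disjoint,
    finsum_eq_sum_of_fintype]

section BipartiteSumGraph

/-- A bipartite multicolored analogue of a Cayley sum graph: the color of `(i, s, e)` is `i`, the
side of the bipartition is `e`, and vertices `(i, s, e)` and `(j, t, !e)` are adjacent when `s + t`
lies in `S s(i, j)`. Indexing the connection sets by unordered pairs makes adjacency symmetric,
and the two sides rule out loops at `s` with `s + s ∈ S s(i, i)`. -/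
def bipartiteSumGraph [AddCommMagma A] (S : Sym2 ι → Set A) : SimpleGraph (ι × A × Bool) where
  Adj u v := u.2.2 ≠ v.2.2 ∧ u.2.1 + v.2.1 ∈ S s(u.1, v.1)
  symm := ⟨fun u v ⟨h_side, h_sum⟩ ↦
    ⟨h_side.symm, by rwa [add_comm v.2.1, Sym2.eq_swap]⟩⟩
  loopless := ⟨fun _ h ↦ h.1 rfl⟩

lemma bipartiteSumGraph_ncard_adj_color [AddCommGroup A] (S : Sym2 ι → Set A)
    (v : ι × A × Bool) (j : ι) :
    {u | (bipartiteSumGraph S).Adj v u ∧ u.1 = j}.ncard = (S s(v.1, j)).ncard := by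
  obtain ⟨i, s, e⟩ := v
  let neighbor (r : A) : ι × A × Bool := (j, r - s, !e)
  have h_injective : Function.Injective neighbor := fun r r' h ↦ by
    simpa [neighbor] using h
  have h_image : {u | (bipartiteSumGraph S).Adj (i, s, e) u ∧ u.1 = j} =
      neighbor '' S s(i, j) := by
    ext ⟨j', t, f⟩
    constructor
    · rintro ⟨⟨h_side, h_sum⟩, rfl⟩
      exact ⟨s + t, h_sum, by
        simpa [neighbor] using Bool.not_eq.2 h_side⟩
    · rintro ⟨r, hr, h⟩
      obtain ⟨rfl, rfl, rfl⟩ : j = j' ∧ r - s = t ∧ (!e) = f := by simpa [neighbor] using h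
      exact ⟨⟨by simp, by simpa using hr⟩, rfl⟩
  rw [h_image, Set.ncard_image_of_injective _ h_injective]

end BipartiteSumGraph

theorem exists_graph_ncard_adj_color_eq [Finite ι] (n : Sym2 ι → ℕ) :
    ∃ (m : ℕ) (G : SimpleGraph (Fin m)) (c : Fin m → ι), Function.Surjective c ∧
      ∀ v j, {u | G.Adj v u ∧ c u = j}.ncard = n s(c v, j) := by
  obtain ⟨q, hq⟩ := (Set.finite_range n).bddAbove
  have h_le (z) : n z ≤ (Finset.univ : Finset (ZMod (q + 1))).card := by
    simpa [ZMod.card] using (hq ⟨z, rfl⟩).trans q.le_succ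
  choose S _ hS using fun z ↦ Finset.exists_subset_card_eq (h_le z)
  obtain ⟨m, ⟨e⟩⟩ := Finite.exists_equiv_fin (ι × ZMod (q + 1) × Bool)
  let H := bipartiteSumGraph fun z ↦ (S z : Set (ZMod (q + 1)))
  refine ⟨m, H.comap e.symm, fun x ↦ (e.symm x).1,
    Prod.fst_surjective.comp e.symm.surjective, fun v j ↦ ?_⟩
  calc {u | (H.comap e.symm).Adj v u ∧ (e.symm u).1 = j}.ncard
      = {u | H.Adj (e.symm v) u ∧ u.1 = j}.ncard :=
        Set.ncard_preimage_of_injective_subset_range (s := {u | H.Adj (e.symm v) u ∧ u.1 = j})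
          e.symm.injective (by simp)
    _ = n s((e.symm v).1, j) := by
        rw [bipartiteSumGraph_ncard_adj_color, Set.ncard_coe_finset, hS]

lemma exists_common_denominator [Finite ι] (w : ι → ℚ≥0) :
    ∃ (d : ℕ) (n : ι → ℕ), 0 < d ∧ ∀ i, (n i : ℚ≥0) = w i * d := by
  have := Fintype.ofFinite ι
  have h_dvd (i) : (w i).den ∣ ∏ j, (w j).den := Finset.dvd_prod_of_mem _ (Finset.mem_univ i)
  choose r hr using h_dvd
  refine ⟨∏ j, (w j).den, fun i ↦ (w i).num * r i,
    Finset.prod_pos fun j _ ↦ (w j).den_pos, fun i ↦ ?_⟩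
  rw [hr i, Nat.cast_mul, Nat.cast_mul, ← mul_assoc, NNRat.mul_den_eq_num]

theorem exists_regular_graph_of_symmetric_stochastic [Fintype ι] (w : Sym2 ι → ℚ≥0)
    (hw : ∀ i, ∑ j, w s(i, j) = 1) :
    ∃ (m : ℕ) (G : SimpleGraph (Fin m)) (d : ℕ),
      0 < d ∧ (∀ v, (G.neighborSet v).ncard = d) ∧
      ∃ c : Fin m → ι, Function.Surjective c ∧
        ∀ v j, ({u | G.Adj v u ∧ c u = j}.ncard : ℚ≥0) = w s(c v, j) * d := by
  obtain ⟨d, n, hd, hn⟩ := exists_common_denominator w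
  obtain ⟨m, G, c, hc, h_count⟩ := exists_graph_ncard_adj_color_eq n
  have h_degree (v) : (G.neighborSet v).ncard = d := by
    have : ((G.neighborSet v).ncard : ℚ≥0) = d := by
      simp_rw [ncard_neighborSet_eq_sum G c (Set.toFinite _), h_count, Nat.cast_sum, hn,
        ← Finset.sum_mul, hw, one_mul]
    exact_mod_cast this
  exact ⟨m, G, d, hd, h_degree, c, hc, fun v j ↦ by rw [h_count, hn]⟩

lemma sum_ite_eq_add_card_sub_one_mul {R : Type*} [Ring R] [Fintype ι] [DecidableEq ι]
    (i : ι) (a b : R) :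
    ∑ j, (if i = j then b else a) = b + ((Fintype.card ι : R) - 1) * a := by
  have h_split (j : ι) : (if i = j then b else a) = a + if i = j then b - a else 0 := by
    split_ifs <;> simp
  simp only [h_split, Finset.sum_add_distrib, Fintype.sum_ite_eq, Finset.sum_const,
    Finset.card_univ, nsmul_eq_mul]
  noncomm_ring

theorem stmt_12_general (k : ℕ) (α β : ℚ) (hα : 0 ≤ α) (hβ : 0 ≤ β)
    (h : β + ((k : ℚ) - 1) * α = 1) :
    ∃ (m : ℕ) (G : SimpleGraph (Fin m)) (d : ℕ),
      0 < d ∧ (∀ v : Fin m, (G.neighborSet v).ncard = d) ∧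
      ∃ c : Fin m → Fin k, IsFATColoring G k (α : ℝ) (β : ℝ) c := by
  lift α to ℚ≥0 using hα
  lift β to ℚ≥0 using hβ
  let w (z : Sym2 (Fin k)) : ℚ≥0 := if z.IsDiag then β else α
  have hw (i : Fin k) : ∑ j, w s(i, j) = 1 := by
    rw [← NNRat.coe_inj, NNRat.cast_sum]
    simpa [w, apply_ite, sum_ite_eq_add_card_sub_one_mul] using h
  obtain ⟨m, G, d, hd, h_degree, c, hc, h_color⟩ :=
    exists_regular_graph_of_symmetric_stochastic w hw
  refine ⟨m, G, d, hd, h_degree, c, hc, fun v i ↦ ?_⟩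
  have h_cast := congrArg (NNRat.cast : ℚ≥0 → ℝ) (h_color v i)
  rw [Nat.card_coe_set_eq, h_degree]
  simpa [w, apply_ite, ite_mul] using h_cast

theorem stmt_12 (k : ℕ) (hk : 2 ≤ k) (α β : ℚ)
    (hα : 0 ≤ α ∧ α < 1 / ((k : ℚ) - 1)) (hβ : β ∈ Set.Icc (0 : ℚ) 1)
    (h : β + ((k : ℚ) - 1) * α = 1) :
    ∃ (m : ℕ) (G : SimpleGraph (Fin m)) (d : ℕ),
      0 < d ∧ (∀ v : Fin m, (G.neighborSet v).ncard = d) ∧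
      ∃ c : Fin m → Fin k, IsFATColoring G k (α : ℝ) (β : ℝ) c := by
  exact stmt_12_general k α β hα.1 hβ.1 h
end

section
/- Let k ≥ 2 be an integer, and let α ∈ [0, 1/(k-1)) and β ∈ [0,1] be rational numbers satisfying β + (k-1)·α = 1. Then there exists a sequence (G_n)_{n ∈ ℕ} of finite simple graphs such that: (i) each G_n is regular of positive degree; (ii) each G_n admits a FAT k-coloring with parameters α and β; and (iii) for all m ≠ n, the graphs G_m and G_n are not homomorphically equivalent, i.e., it is not the case that there exist both a graph homomorphism from G_m to G_n and a graph homomorphism from G_n to G_m. -/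
/-!
Take `k` copies of a vertex set `W`, one per color, and join vertices of the same copy by a
`b`-regular graph `H` and vertices of different copies by an `a`-regular graph `K`.
Every vertex then has `b` neighbors of its own color and `a` of every other color, which is a FAT
coloring as soon as `a : b = α : β`. Letting `H` and `K` be the rows and the columns of a
`(b + 1) × (a + 1)` rook's graph, and scaling `a` and `b` up, makes the cliques arbitrarily large
(here `α < 1 / (k - 1)` enters, as `β > 0`). Homomorphisms are injective on cliques, so a graph with
large enough cliques maps to none of finitely many given finite graphs.
-/

section

open SimpleGraph

variable {V V' W ι : Type*} {k : ℕ}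

/-- Homomorphic equivalence of graphs: homomorphisms exist in both directions. -/
def HomEquivalent (G : SimpleGraph V) (G' : SimpleGraph V') : Prop :=
  Nonempty (G →g G') ∧ Nonempty (G' →g G)

theorem HomEquivalent.symm {G : SimpleGraph V} {G' : SimpleGraph V'} (h : HomEquivalent G G') :
    HomEquivalent G' G :=
  And.symm h

theorem cliqueFree_of_hom {G : SimpleGraph V} {G' : SimpleGraph V'} {n : ℕ} (f : G →g G')
    (h : G'.CliqueFree n) : G.CliqueFree n := by
  contrapose h
  let g := f.comp (topEmbeddingOfNotCliqueFree h).toHom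
  exact IsContained.not_cliqueFree ⟨g.toCopy g.injective_of_top_hom⟩

theorem exists_seq_pairwise_not_homEquivalent {V : ι → Type*} (G : ∀ i, SimpleGraph (V i))
    (hfree : ∀ i, ∃ n, (G i).CliqueFree n) (hclique : ∀ n, ∃ i, ¬ (G i).CliqueFree n) :
    ∃ f : ℕ → ι, Pairwise fun m n ↦ ¬ HomEquivalent (G (f m)) (G (f n)) := by
  choose N hN using hfree
  have : Std.Symm fun i j ↦ ¬ HomEquivalent (G i) (G j) := ⟨fun _ _ h h' ↦ h h'.symm⟩
  obtain ⟨f, -, hf⟩ := exists_seq_of_forall_finset_exists' (fun _ ↦ True)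
    (fun i j ↦ ¬ HomEquivalent (G i) (G j)) fun s _ ↦ by
      obtain ⟨j, hj⟩ := hclique (s.sup N)
      refine ⟨j, trivial, fun i hi h ↦ hj ?_⟩
      exact cliqueFree_of_hom h.2.some ((hN i).mono (Finset.le_sup hi))
  exact ⟨f, hf⟩

theorem ncard_neighborSet_eq_degree (G : SimpleGraph V) (v : V) [Fintype (G.neighborSet v)] :
    (G.neighborSet v).ncard = G.degree v := by
  rw [Set.ncard_eq_toFinset_card', Set.toFinset_card, card_neighborSet_eq_degree]

theorem isRegularOfDegree_boxProd {G : SimpleGraph V} {G' : SimpleGraph V'} [G.LocallyFinite]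
    [G'.LocallyFinite] {d d' : ℕ} (hG : G.IsRegularOfDegree d) (hG' : G'.IsRegularOfDegree d') :
    (G □ G').IsRegularOfDegree (d + d') := fun v ↦ by
  rw [degree_boxProd, hG.degree_eq, hG'.degree_eq]

theorem ncard_neighborSet_iso {G : SimpleGraph V} {G' : SimpleGraph V'} (e : G' ≃g G) (v : V') :
    (G'.neighborSet v).ncard = (G.neighborSet (e v)).ncard :=
  Nat.card_congr (e.mapNeighborSet v)

theorem IsFATColoring.comp_iso {G : SimpleGraph V} {G' : SimpleGraph V'} {α β : ℝ} {c : V → Fin k}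
    (hc : IsFATColoring G k α β c) (e : G' ≃g G) : IsFATColoring G' k α β (c ∘ e) := by
  refine ⟨hc.1.comp e.surjective, fun v i ↦ ?_⟩
  have hcard : Nat.card {u | G'.Adj v u ∧ (c ∘ e) u = i} = Nat.card {u | G.Adj (e v) u ∧ c u = i} :=
    Nat.card_congr (e.toEquiv.subtypeEquiv fun u ↦ and_congr_left' e.map_adj_iff.symm)
  rw [hcard, ncard_neighborSet_iso e]
  exact hc.2 (e v) i

/-- The graph on `ι × W` whose edges within each fiber `{i} × W` are those of `H`, and whose edges
between two distinct fibers are those of `K`. The first projection is the intended coloring. -/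
def fiberGraph (ι : Type*) (H K : SimpleGraph W) : SimpleGraph (ι × W) where
  Adj v w := v.1 = w.1 ∧ H.Adj v.2 w.2 ∨ v.1 ≠ w.1 ∧ K.Adj v.2 w.2
  symm := ⟨fun _ _ ↦ Or.imp (And.imp Eq.symm .symm) (And.imp Ne.symm .symm)⟩
  loopless := ⟨fun _ ↦ by simp⟩

namespace fiberGraph

variable {H K : SimpleGraph W}

theorem adj_iff {v w : ι × W} :
    (fiberGraph ι H K).Adj v w ↔ v.1 = w.1 ∧ H.Adj v.2 w.2 ∨ v.1 ≠ w.1 ∧ K.Adj v.2 w.2 :=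
  Iff.rfl

theorem isContained (i : ι) : H ⊑ fiberGraph ι H K :=
  ⟨⟨⟨Prod.mk i, fun h ↦ Or.inl ⟨rfl, h⟩⟩, Prod.mk_right_injective i⟩⟩

theorem setOf_adj_and_fst_eq [DecidableEq ι] (v : ι × W) (i : ι) :
    {u | (fiberGraph ι H K).Adj v u ∧ u.1 = i} =
      {i} ×ˢ (if v.1 = i then H.neighborSet v.2 else K.neighborSet v.2) := by
  ext u
  split_ifs <;> simp [adj_iff] <;> grind

theorem neighborSet_eq (v : ι × W) :
    (fiberGraph ι H K).neighborSet v =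
      {v.1} ×ˢ H.neighborSet v.2 ∪ {v.1}ᶜ ×ˢ K.neighborSet v.2 := by
  ext u
  simp [adj_iff, eq_comm]

variable [H.LocallyFinite] [K.LocallyFinite] {a b : ℕ}

theorem ncard_adj_and_fst_eq [DecidableEq ι] (hH : H.IsRegularOfDegree b)
    (hK : K.IsRegularOfDegree a) (v : ι × W) (i : ι) :
    {u | (fiberGraph ι H K).Adj v u ∧ u.1 = i}.ncard = if v.1 = i then b else a := by
  rw [setOf_adj_and_fst_eq, Set.ncard_prod, Set.ncard_singleton, one_mul]
  split_ifs
  · rw [ncard_neighborSet_eq_degree, hH.degree_eq]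
  · rw [ncard_neighborSet_eq_degree, hK.degree_eq]

theorem ncard_neighborSet [Finite ι] (hH : H.IsRegularOfDegree b) (hK : K.IsRegularOfDegree a)
    (v : ι × W) : ((fiberGraph ι H K).neighborSet v).ncard = b + (Nat.card ι - 1) * a := by
  have hdisj : Disjoint ({v.1} ×ˢ H.neighborSet v.2) ({v.1}ᶜ ×ˢ K.neighborSet v.2) :=
    Set.disjoint_prod.2 (Or.inl disjoint_compl_right)
  rw [neighborSet_eq, Set.ncard_union_eq hdisj, Set.ncard_prod, Set.ncard_prod, Set.ncard_compl,
    Set.ncard_singleton, ncard_neighborSet_eq_degree, ncard_neighborSet_eq_degree, hH.degree_eq,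
    hK.degree_eq, one_mul]

theorem isFATColoring_fst [Nonempty W] {α β : ℝ} (hH : H.IsRegularOfDegree b)
    (hK : K.IsRegularOfDegree a) (hα : (a : ℝ) = α * ((b + (k - 1) * a : ℕ) : ℝ))
    (hβ : (b : ℝ) = β * ((b + (k - 1) * a : ℕ) : ℝ)) :
    IsFATColoring (fiberGraph (Fin k) H K) k α β Prod.fst := by
  refine ⟨Prod.fst_surjective, fun v i ↦ ?_⟩
  rw [Nat.card_coe_set_eq, ncard_adj_and_fst_eq hH hK, ncard_neighborSet hH hK, Nat.card_fin,
    ← hα, ← hβ, Nat.cast_ite]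

end fiberGraph

theorem exists_natCast_eq_mul {α β : ℚ} (hα : 0 ≤ α) (hβ : 0 < β) (n : ℕ) :
    ∃ a b q : ℕ, n ≤ b ∧ (a : ℚ) = α * q ∧ (b : ℚ) = β * q := by
  lift α to ℚ≥0 using hα
  lift β to ℚ≥0 using hβ.le
  have hnum : 0 < β.num := NNRat.num_pos.2 (mod_cast hβ)
  refine ⟨n * (α.num * β.den), n * (α.den * β.num), n * (α.den * β.den),
    Nat.le_mul_of_pos_right n (Nat.mul_pos α.den_pos hnum), ?_, ?_⟩ <;>
  · norm_cast
    push_cast [← NNRat.mul_den_eq_num]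
    ring

theorem exists_natCast_eq_mul_add {α β : ℚ} (hk : 0 < k) (hα : 0 ≤ α) (hβ : 0 < β)
    (h : β + ((k : ℚ) - 1) * α = 1) (n : ℕ) :
    ∃ a b : ℕ, n ≤ b ∧ (a : ℚ) = α * ((b + (k - 1) * a : ℕ) : ℚ) ∧
      (b : ℚ) = β * ((b + (k - 1) * a : ℕ) : ℚ) := by
  obtain ⟨a, b, q, hb, haq, hbq⟩ := exists_natCast_eq_mul hα hβ n
  have hq : ((b + (k - 1) * a : ℕ) : ℚ) = q := by
    push_cast [Nat.cast_sub hk, haq, hbq]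
    linear_combination (q : ℚ) * h
  exact ⟨a, b, hb, hq ▸ haq, hq ▸ hbq⟩

theorem exists_regular_isFATColoring_not_cliqueFree {α β : ℚ} (hk : 0 < k) (hα : 0 ≤ α)
    (hβ : 0 < β) (h : β + ((k : ℚ) - 1) * α = 1) (n : ℕ) :
    ∃ (m : ℕ) (G : SimpleGraph (Fin m)),
      (∃ d : ℕ, 0 < d ∧ ∀ v, (G.neighborSet v).ncard = d) ∧
      (∃ c, IsFATColoring G k (α : ℝ) (β : ℝ) c) ∧ ¬ G.CliqueFree n := by
  obtain ⟨a, b, hb, ha_eq, hb_eq⟩ := exists_natCast_eq_mul_add hk hα hβ h (n + 1)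
  let H := (⊤ : SimpleGraph (Fin (b + 1))) □ (⊥ : SimpleGraph (Fin (a + 1)))
  let K := (⊥ : SimpleGraph (Fin (b + 1))) □ (⊤ : SimpleGraph (Fin (a + 1)))
  have hH : H.IsRegularOfDegree b := by
    simpa using isRegularOfDegree_boxProd (IsRegularOfDegree.top (V := Fin (b + 1)))
      (IsRegularOfDegree.bot (V := Fin (a + 1)))
  have hK : K.IsRegularOfDegree a := by
    simpa using isRegularOfDegree_boxProd (IsRegularOfDegree.bot (V := Fin (b + 1)))
      (IsRegularOfDegree.top (V := Fin (a + 1)))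
  have hfat : IsFATColoring (fiberGraph (Fin k) H K) k (α : ℝ) (β : ℝ) Prod.fst :=
    fiberGraph.isFATColoring_fst hH hK (mod_cast ha_eq) (mod_cast hb_eq)
  have hclique : ¬ (fiberGraph (Fin k) H K).CliqueFree (b + 1) :=
    IsContained.not_cliqueFree <|
      (boxProdLeft ⊤ ⊥ 0).isContained.trans (fiberGraph.isContained (H := H) ⟨0, hk⟩)
  let e := (fiberGraph (Fin k) H K).overFinIso rfl
  refine ⟨_, _, ⟨b + (k - 1) * a, by lia, fun v ↦ ?_⟩, ⟨_, hfat.comp_iso e.symm⟩, fun hfree ↦ ?_⟩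
  · rw [ncard_neighborSet_iso e.symm, fiberGraph.ncard_neighborSet hH hK, Nat.card_fin]
  · exact hclique ((cliqueFree_of_hom e.toHom hfree).mono (by lia))

end

theorem stmt_13 (k : ℕ) (hk : 2 ≤ k) (α β : ℚ)
    (hα : 0 ≤ α ∧ α < 1 / ((k : ℚ) - 1)) (hβ : β ∈ Set.Icc (0 : ℚ) 1)
    (h : β + ((k : ℚ) - 1) * α = 1) :
    ∃ (m : ℕ → ℕ) (G : (n : ℕ) → SimpleGraph (Fin (m n))),
      (∀ n : ℕ, ∃ d : ℕ, 0 < d ∧ ∀ v : Fin (m n), ((G n).neighborSet v).ncard = d) ∧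
      (∀ n : ℕ, ∃ c : Fin (m n) → Fin k, IsFATColoring (G n) k (α : ℝ) (β : ℝ) c) ∧
      (∀ i j : ℕ, i ≠ j →
        ¬ (Nonempty (G i →g G j) ∧ Nonempty (G j →g G i))) := by
  have hβ_pos : 0 < β := by
    have hk_sub : (0 : ℚ) < (k : ℚ) - 1 := sub_pos.2 (mod_cast hk)
    linarith [(lt_div_iff₀' hk_sub).1 hα.2]
  choose m G hregular hfat hclique using
    exists_regular_isFATColoring_not_cliqueFree (by lia) hα.1 hβ_pos h
  obtain ⟨f, hf⟩ := exists_seq_pairwise_not_homEquivalent G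
    (fun i ↦ ⟨m i + 1, SimpleGraph.cliqueFree_of_card_lt (by simp)⟩) (fun n ↦ ⟨n, hclique n⟩)
  exact ⟨m ∘ f, fun n ↦ G (f n), fun n ↦ hregular (f n), fun n ↦ hfat (f n), fun _ _ ↦ @hf _ _⟩
end

section
/- Let k ≥ 2 be an integer, and let α ∈ [0, 1/(k-1)) and β ∈ [0,1] be rational numbers satisfying β + (k-1)·α = 1. Then there exists a sequence (G_n)_{n ∈ ℕ} of finite simple graphs, each regular of positive degree and each admitting a FAT k-coloring with parameters α and β, such that the clique numbers ω(G_n) are pairwise distinct (ω(G_m) ≠ ω(G_n) whenever m ≠ n). -/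
/-!
Color `K_k` with `k` colors: every vertex has one neighbor of each color but its own, and none of
its own. The tensor product with `K_{p+1}` multiplies these numbers by `p`, and the box product with
`K_{q+1}` then adds `q` neighbors of the vertex's own color, so that the resulting graph is FAT with
`α = p / d` and `β = q / d`, where `d = q + (k - 1) * p`. Scaling `p` and `q` by the same factor
changes neither `α` nor `β`, and as `q > 0` it makes the clique `K_{q+1}` arbitrarily large.
-/

open Set SimpleGraph

lemma le_cliqueNum_of_isContained {V : Type*} [Finite V] {G : SimpleGraph V} {n : ℕ}
    (h : completeGraph (Fin n) ⊑ G) : n ≤ G.cliqueNum := by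
  obtain ⟨s, hs⟩ : ∃ s, G.IsNClique n s := by
    simpa only [CliqueFree, not_forall, not_not] using h.not_cliqueFree
  exact hs.card_eq ▸ hs.isClique.card_le_cliqueNum

section TensorProduct

variable {V W : Type*}

/-- The tensor (or categorical) product of two graphs: pairs are adjacent when both of their
coordinates are. -/
def tensorProd (G : SimpleGraph V) (H : SimpleGraph W) : SimpleGraph (V × W) :=
  G.comap Prod.fst ⊓ H.comap Prod.snd

lemma neighborSet_tensorProd (G : SimpleGraph V) (H : SimpleGraph W) (x : V × W) :
    (tensorProd G H).neighborSet x = G.neighborSet x.1 ×ˢ H.neighborSet x.2 :=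
  rfl

end TensorProduct

lemma encard_neighborSet_of_isRegularOfDegree {V : Type*} {G : SimpleGraph V} [G.LocallyFinite]
    {d : ℕ} (hG : G.IsRegularOfDegree d) (v : V) : (G.neighborSet v).encard = d := by
  rw [← coe_neighborFinset, encard_coe_eq_coe_finsetCard, card_neighborFinset_eq_degree, hG v]

/-- The coloring `c` of `G` gives every vertex exactly `q` neighbors of its own color and exactly
`p` neighbors of each other color. This is a FAT coloring given by numbers of neighbors instead of
proportions; counting with `encard` excludes infinite sets, which `ncard` counts as empty. -/
def HasColorDegrees {V C : Type*} [DecidableEq C] (G : SimpleGraph V) (c : V → C) (p q : ℕ) :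
    Prop :=
  ∀ v i, (G.neighborSet v ∩ c ⁻¹' {i}).encard = if c v = i then (q : ℕ∞) else p

lemma hasColorDegrees_top_id {C : Type*} [DecidableEq C] :
    HasColorDegrees (⊤ : SimpleGraph C) id 1 0 := by
  intro v i
  split_ifs with hi
  · simp_all
  · have : (⊤ : SimpleGraph C).neighborSet v ∩ id ⁻¹' {i} = {i} := by
      simpa [eq_comm] using hi
    rw [this, encard_singleton, Nat.cast_one]

namespace HasColorDegrees

variable {V W C : Type*} [DecidableEq C] {G : SimpleGraph V} {H : SimpleGraph W} {c : V → C}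
  {p q r : ℕ}

lemma comp_iso (h : HasColorDegrees G c p q) (φ : H ≃g G) : HasColorDegrees H (c ∘ φ) p q := by
  intro v i
  have : H.neighborSet v ∩ c ∘ φ ⁻¹' {i} = φ ⁻¹' (G.neighborSet (φ v) ∩ c ⁻¹' {i}) := by
    rw [preimage_inter, preimage_comp, ← φ.toEmbedding.preimage_neighborSet v]
    rfl
  rw [this, encard_preimage_of_bijective φ.bijective]
  exact h (φ v) i

lemma tensorProd_of_isRegularOfDegree [H.LocallyFinite] (h : HasColorDegrees G c p q)
    (hH : H.IsRegularOfDegree r) :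
    HasColorDegrees (tensorProd G H) (c ∘ Prod.fst) (p * r) (q * r) := by
  rintro ⟨v, w⟩ i
  have : (tensorProd G H).neighborSet (v, w) ∩ (c ∘ Prod.fst) ⁻¹' {i} =
      (G.neighborSet v ∩ c ⁻¹' {i}) ×ˢ H.neighborSet w := by
    rw [neighborSet_tensorProd]
    grind
  rw [this, encard_prod, h v i, encard_neighborSet_of_isRegularOfDegree hH, ite_mul]
  push_cast
  rfl

lemma boxProd_of_isRegularOfDegree [H.LocallyFinite] (h : HasColorDegrees G c p q)
    (hH : H.IsRegularOfDegree r) :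
    HasColorDegrees (G □ H) (c ∘ Prod.fst) p (q + r) := by
  rintro ⟨v, w⟩ i
  have hsplit : (G □ H).neighborSet (v, w) ∩ (c ∘ Prod.fst) ⁻¹' {i} =
      (G.neighborSet v ∩ c ⁻¹' {i}) ×ˢ {w} ∪ ({v} ∩ c ⁻¹' {i}) ×ˢ H.neighborSet w := by
    rw [neighborSet_boxProd]
    grind
  have hdisj : Disjoint ((G.neighborSet v ∩ c ⁻¹' {i}) ×ˢ {w})
      (({v} ∩ c ⁻¹' {i}) ×ˢ H.neighborSet w) :=
    disjoint_prod.2 <| .inr <| disjoint_singleton_left.2 H.irrefl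
  rw [hsplit, encard_union_eq hdisj, encard_prod, encard_prod, h v i, encard_singleton,
    encard_neighborSet_of_isRegularOfDegree hH]
  by_cases hi : c v = i <;> simp [hi]

lemma encard_neighborSet [Fintype C] (h : HasColorDegrees G c p q) (v : V) :
    (G.neighborSet v).encard = (q + (Fintype.card C - 1) * p : ℕ) := by
  have hunion : G.neighborSet v = ⋃ i, G.neighborSet v ∩ c ⁻¹' {i} := by
    ext; simp
  have hdisj : Pairwise (Function.onFun Disjoint fun i ↦ G.neighborSet v ∩ c ⁻¹' {i}) :=
    fun i j hij ↦ ((disjoint_singleton.2 hij).preimage c).mono inter_subset_right inter_subset_right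
  calc (G.neighborSet v).encard
      = ∑ i, if c v = i then (q : ℕ∞) else p := by
        rw [hunion, encard_iUnion_of_finite hdisj, finsum_eq_sum_of_fintype]
        exact Finset.sum_congr rfl fun i _ ↦ h v i
    _ = (q + (Fintype.card C - 1) * p : ℕ) := by
        rw [← Finset.add_sum_erase _ _ (Finset.mem_univ (c v)), if_pos rfl,
          Finset.sum_congr rfl fun i hi ↦ if_neg (Finset.ne_of_mem_erase hi).symm]
        simp

lemma isFATColoring {k : ℕ} {c : V → Fin k} (h : HasColorDegrees G c p q)
    (hc : Function.Surjective c) {α β : ℝ} {d : ℕ} (hd : ∀ v, (G.neighborSet v).ncard = d)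
    (hp : p = α * d) (hq : q = β * d) : IsFATColoring G k α β c := by
  refine ⟨hc, fun v i ↦ ?_⟩
  have hcard : Nat.card {u | G.Adj v u ∧ c u = i} = if c v = i then q else p := by
    rw [Nat.card_coe_set_eq]
    have := congrArg ENat.toNat (h v i)
    rwa [← Nat.cast_ite, ENat.toNat_natCast] at this
  rw [hcard, hd, Nat.cast_ite, hp, hq]

end HasColorDegrees

lemma exists_hasColorDegrees_and_lt_cliqueNum (C : Type*) [Finite C] [Nonempty C] [DecidableEq C]
    (p q : ℕ) :
    ∃ (m : ℕ) (G : SimpleGraph (Fin m)) (c : Fin m → C),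
      HasColorDegrees G c p q ∧ Function.Surjective c ∧ q < G.cliqueNum := by
  have := Fintype.ofFinite C
  have hreg (r : ℕ) : (⊤ : SimpleGraph (Fin (r + 1))).IsRegularOfDegree r := by
    simpa only [Fintype.card_fin, Nat.add_sub_cancel] using
      IsRegularOfDegree.top (V := Fin (r + 1))
  let T := tensorProd (⊤ : SimpleGraph C) (⊤ : SimpleGraph (Fin (p + 1)))
  let G := T □ (⊤ : SimpleGraph (Fin (q + 1)))
  let φ := G.overFinIso rfl
  have hT : HasColorDegrees T Prod.fst p 0 := by
    simpa using hasColorDegrees_top_id.tensorProd_of_isRegularOfDegree (hreg p)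
  have hG : HasColorDegrees G (Prod.fst ∘ Prod.fst) p q := by
    simpa using hT.boxProd_of_isRegularOfDegree (hreg q)
  refine ⟨_, _, _, hG.comp_iso φ.symm, ?_, ?_⟩
  · exact (Prod.fst_surjective.comp Prod.fst_surjective).comp φ.symm.surjective
  · exact le_cliqueNum_of_isContained
      (φ.toEmbedding.comp (T.boxProdRight ⊤ (Classical.arbitrary _))).isContained

lemma exists_nat_eq_div_add_mul {α β : ℚ} {r : ℕ} (hα : 0 ≤ α) (hβ : 0 < β) (h : β + r * α = 1) :
    ∃ p q : ℕ, 0 < q ∧ α = p / (q + r * p : ℕ) ∧ β = q / (q + r * p : ℕ) := by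
  lift α to ℚ≥0 using hα
  have hα_den : (α : ℚ) * α.den = α.num := by exact_mod_cast α.mul_den_eq_num
  have hden : (0 : ℚ) < α.den := by exact_mod_cast α.den_pos
  have hβ_den : β * α.den = α.den - r * α.num := by linear_combination α.den * h - r * hα_den
  have hlt : r * α.num < α.den := by
    have : (0 : ℚ) < α.den - r * α.num := hβ_den ▸ by positivity
    exact_mod_cast sub_pos.1 this
  refine ⟨α.num, α.den - r * α.num, Nat.sub_pos_of_lt hlt, ?_, ?_⟩
  · rw [Nat.sub_add_cancel hlt.le, eq_div_iff hden.ne', hα_den]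
  · rw [Nat.sub_add_cancel hlt.le, eq_div_iff hden.ne', hβ_den]
    push_cast [hlt.le]
    rfl

lemma exists_regular_isFATColoring_le_cliqueNum {k : ℕ} (hk : 1 ≤ k) {α β : ℚ} (hα : 0 ≤ α)
    (hβ : 0 < β) (h : β + ((k : ℚ) - 1) * α = 1) (n : ℕ) :
    ∃ (m : ℕ) (G : SimpleGraph (Fin m)),
      (∃ d, 0 < d ∧ ∀ v, (G.neighborSet v).ncard = d) ∧
      (∃ c, IsFATColoring G k (α : ℝ) (β : ℝ) c) ∧ n ≤ G.cliqueNum := by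
  have : Nonempty (Fin k) := ⟨⟨0, hk⟩⟩
  obtain ⟨p, q, hq, rfl, rfl⟩ :=
    exists_nat_eq_div_add_mul (r := k - 1) hα hβ (by rwa [Nat.cast_pred hk])
  obtain ⟨m, G, c, hcol, hc, hclique⟩ :=
    exists_hasColorDegrees_and_lt_cliqueNum (Fin k) ((n + 1) * p) ((n + 1) * q)
  have hdeg (v) : (G.neighborSet v).ncard = (n + 1) * (q + (k - 1) * p) := by
    rw [ncard_def, hcol.encard_neighborSet, ENat.toNat_natCast, Fintype.card_fin]
    ring
  have hpos : (0 : ℝ) < (q + (k - 1) * p : ℕ) := by positivity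
  refine ⟨m, G, ⟨_, by positivity, hdeg⟩, ⟨c, hcol.isFATColoring hc hdeg ?_ ?_⟩, by nlinarith⟩ <;>
  · push_cast at hpos ⊢
    field_simp

theorem stmt_14 (k : ℕ) (hk : 2 ≤ k) (α β : ℚ)
    (hα : 0 ≤ α ∧ α < 1 / ((k : ℚ) - 1)) (hβ : β ∈ Set.Icc (0 : ℚ) 1)
    (h : β + ((k : ℚ) - 1) * α = 1) :
    ∃ (m : ℕ → ℕ) (G : (n : ℕ) → SimpleGraph (Fin (m n))),
      (∀ n : ℕ, ∃ d : ℕ, 0 < d ∧ ∀ v : Fin (m n), ((G n).neighborSet v).ncard = d) ∧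
      (∀ n : ℕ, ∃ c : Fin (m n) → Fin k, IsFATColoring (G n) k (α : ℝ) (β : ℝ) c) ∧
      (∀ i j : ℕ, i ≠ j → (G i).cliqueNum ≠ (G j).cliqueNum) := by
  have hk_pos : (0 : ℚ) < (k : ℚ) - 1 := sub_pos.2 (by exact_mod_cast hk)
  have hβ_pos : 0 < β := by
    have := (lt_div_iff₀ hk_pos).1 hα.2
    linarith
  choose m G hreg hFAT hclique using
    exists_regular_isFATColoring_le_cliqueNum (one_le_two.trans hk) hα.1 hβ_pos h
  obtain ⟨φ, -, hφ⟩ := Filter.strictMono_subseq_of_id_le hclique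
  exact ⟨m ∘ φ, fun n ↦ G (φ n), fun n ↦ hreg (φ n), fun n ↦ hFAT (φ n),
    fun _ _ hij ↦ hφ.injective.ne hij⟩
end
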